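/- There exists a universal constant C such that for all 0 ≤ r' < r and every 2π-periodic function g : S̄_r → ℂ holomorphic on the open strip S_r = {α + iζ ∈ ℂ : |ζ| < r} and continuous up to the boundary, with ‖g‖_r := ( Σ_± ∫_𝕋 |g(α ± ir)|² dα + Σ_± ∫_𝕋 |∂_α⁴ g(α ± ir)|² dα )^{1/2} finite, one has ‖∂_α g‖_{r'} ≤ (C/(r − r')) ‖g‖_r, where ‖∂_α g‖_{r'} is defined by the same formula with r replaced by r' and g replaced by ∂_α g. -/

import Mathlib

open Real MeasureTheory Set

noncomputable section

/-- Open horizontal strip of half-width `r`. -/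
def stripO (r : ℝ) : Set ℂ := {w : ℂ | |w.im| < r}

/-- Closed horizontal strip of half-width `r`. -/
def stripC (r : ℝ) : Set ℂ := {w : ℂ | |w.im| ≤ r}

/-- The scale-of-Banach-spaces norm: `L²` of the function and of its fourth
derivative on the two boundary lines of the strip of half-width `ρ`. -/
def strNorm (G : ℂ → ℂ) (ρ : ℝ) : ℝ :=
  Real.sqrt
    ((∫ α in (-π)..π, ‖G ((α : ℂ) + (ρ : ℂ) * Complex.I)‖ ^ 2
        + ‖iteratedDeriv 4 (fun x : ℝ => G ((x : ℂ) + (ρ : ℂ) * Complex.I)) α‖ ^ 2)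
      + ∫ α in (-π)..π, ‖G ((α : ℂ) - (ρ : ℂ) * Complex.I)‖ ^ 2
        + ‖iteratedDeriv 4 (fun x : ℝ => G ((x : ℂ) - (ρ : ℂ) * Complex.I)) α‖ ^ 2)

/-!
On the line `im = ζ` the `k`-th Fourier coefficient of a `T`-periodic holomorphic `g` is
`exp (-ω ζ)` times that on the real axis, where `ω = 2πk / T`, because shifting the contour does
not change the integral of the periodic function `exp (-iωw) g w` over a period. By Parseval, the
squared norms on the two lines `im = ±ρ` add up to a weighted sum of `2 cosh (2ωρ)`, and
differentiating `g` multiplies the weights by `ω ^ 2`. So everything reduces to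
`ω ^ 2 * cosh (2ωr') ≤ (r - r')⁻² * cosh (2ωr)`, which follows from
`cosh (x + y) ≥ cosh x * cosh y ≥ cosh x * (1 + y ^ 2 / 2)` with `x = 2ωr'`, `y = 2ω(r - r')`.
-/

section Hyperbolic

lemma one_add_sq_div_two_le_cosh (y : ℝ) : 1 + y ^ 2 / 2 ≤ cosh y := by
  have hsinh : |y / 2| ≤ |sinh (y / 2)| := by
    rw [abs_sinh]
    exact self_le_sinh_iff.2 (abs_nonneg _)
  have hcosh := cosh_two_mul (y / 2)
  rw [mul_div_cancel₀ y (two_ne_zero' ℝ), cosh_sq'] at hcosh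
  linarith [sq_le_sq.2 hsinh]

lemma sinh_mul_sinh_nonneg {x y : ℝ} (h : 0 ≤ x * y) : 0 ≤ sinh x * sinh y := by
  rcases mul_nonneg_iff.1 h with ⟨hx, hy⟩ | ⟨hx, hy⟩
  · exact mul_nonneg (sinh_nonneg_iff.2 hx) (sinh_nonneg_iff.2 hy)
  · exact mul_nonneg_of_nonpos_of_nonpos (sinh_nonpos_iff.2 hx) (sinh_nonpos_iff.2 hy)

lemma sq_div_two_mul_cosh_le_cosh_add {x y : ℝ} (h : 0 ≤ x * y) :
    y ^ 2 / 2 * cosh x ≤ cosh (x + y) := calc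
  y ^ 2 / 2 * cosh x ≤ cosh y * cosh x := by
    gcongr
    linarith [one_add_sq_div_two_le_cosh y]
  _ ≤ cosh (x + y) := by
    rw [cosh_add]
    linarith [sinh_mul_sinh_nonneg h]

lemma sq_mul_cosh_le {s r : ℝ} (ω : ℝ) (hs : 0 ≤ s) (hsr : s < r) :
    ω ^ 2 * cosh (2 * ω * s) ≤ (1 / (r - s)) ^ 2 * cosh (2 * ω * r) := by
  have hδ : 0 < r - s := sub_pos.2 hsr
  have hxy : 0 ≤ 2 * ω * s * (2 * ω * (r - s)) := by
    rw [show 2 * ω * s * (2 * ω * (r - s)) = (2 * ω) ^ 2 * (s * (r - s)) by ring]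
    exact mul_nonneg (sq_nonneg _) (mul_nonneg hs hδ.le)
  have hcosh := sq_div_two_mul_cosh_le_cosh_add hxy
  rw [← mul_add, add_sub_cancel] at hcosh
  rw [div_pow, one_pow, div_mul_eq_mul_div, one_mul, le_div_iff₀ (pow_pos hδ 2)]
  have : 0 ≤ (ω * (r - s)) ^ 2 * cosh (2 * ω * s) := mul_nonneg (sq_nonneg _) (cosh_pos _).le
  linarith

end Hyperbolic

section Fourier

/-- The angular frequency `2πk / T` of the `k`-th Fourier mode of period `T`. -/
def angularFrequency (T : ℝ) (k : ℤ) : ℝ := 2 * π * k / T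

lemma fourier_neg_coe_eq_cexp (T : ℝ) (k : ℤ) (x : ℝ) :
    fourier (-k) (x : AddCircle T) =
      Complex.exp (-(angularFrequency T k * x * Complex.I)) := by
  rw [fourier_coe_apply, angularFrequency]
  congr 1
  push_cast
  ring

lemma periodic_cexp_angularFrequency {T : ℝ} (hT : T ≠ 0) (k : ℤ) :
    Function.Periodic (fun w : ℂ => Complex.exp (-(angularFrequency T k * w * Complex.I))) T := by
  intro w
  have hT' : (T : ℂ) ≠ 0 := Complex.ofReal_ne_zero.2 hT
  refine Complex.exp_eq_exp_iff_exists_int.2 ⟨-k, ?_⟩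
  simp only [angularFrequency]
  push_cast
  field_simp
  ring

variable {a b : ℝ} {φ : ℝ → ℂ}

lemma fourierCoeffOn_deriv_of_eq_endpoints {φ' : ℝ → ℂ} (hab : a < b)
    (hφ : ∀ x ∈ uIcc a b, HasDerivAt φ (φ' x) x) (hφ' : IntervalIntegrable φ' volume a b)
    (hend : φ a = φ b) (k : ℤ) :
    fourierCoeffOn hab φ' k =
      angularFrequency (b - a) k * Complex.I * fourierCoeffOn hab φ k := by
  have hT : (b : ℂ) - a ≠ 0 := sub_ne_zero.2 (Complex.ofReal_injective.ne hab.ne')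
  rcases eq_or_ne k 0 with rfl | hk
  · have hint := intervalIntegral.integral_eq_sub_of_hasDerivAt hφ hφ'
    simp [fourierCoeffOn_eq_integral, angularFrequency, hint, hend]
  · have hk' : (k : ℂ) ≠ 0 := Int.cast_ne_zero.2 hk
    have hπ : (π : ℂ) ≠ 0 := Complex.ofReal_ne_zero.2 pi_ne_zero
    rw [fourierCoeffOn_of_hasDerivAt hab hk hφ hφ', hend, sub_self, angularFrequency]
    push_cast
    field_simp
    ring

lemma periodic_deriv {𝕜 F : Type*} [NontriviallyNormedField 𝕜] [NormedAddCommGroup F]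
    [NormedSpace 𝕜 F] {f : 𝕜 → F} {c : 𝕜} (hf : Function.Periodic f c) :
    Function.Periodic (deriv f) c := by
  intro x
  rw [← deriv_comp_add_const, hf.funext]

lemma fourierCoeffOn_deriv (hab : a < b) (hφ : ContDiff ℝ 1 φ)
    (hper : Function.Periodic φ (b - a)) (k : ℤ) :
    fourierCoeffOn hab (deriv φ) k =
      angularFrequency (b - a) k * Complex.I * fourierCoeffOn hab φ k := by
  refine fourierCoeffOn_deriv_of_eq_endpoints hab
    (fun x _ => (hφ.differentiable one_ne_zero x).hasDerivAt)
    ((hφ.continuous_deriv le_rfl).intervalIntegrable _ _) ?_ k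
  rw [← hper a, add_sub_cancel]

lemma fourierCoeffOn_iteratedDeriv {n : ℕ} (hab : a < b) (hφ : ContDiff ℝ n φ)
    (hper : Function.Periodic φ (b - a)) (k : ℤ) :
    fourierCoeffOn hab (iteratedDeriv n φ) k =
      (angularFrequency (b - a) k * Complex.I) ^ n * fourierCoeffOn hab φ k := by
  induction n generalizing φ with
  | zero => simp
  | succ n ih =>
    have hφ' : ContDiff ℝ n (deriv φ) := (contDiff_succ_iff_deriv.1 (mod_cast hφ)).2.2
    rw [iteratedDeriv_succ', ih hφ' (periodic_deriv hper),
      fourierCoeffOn_deriv hab (hφ.of_le (mod_cast n.succ_pos)) hper]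
    ring

lemma norm_sq_fourierCoeffOn_iteratedDeriv {n : ℕ} (hab : a < b) (hφ : ContDiff ℝ n φ)
    (hper : Function.Periodic φ (b - a)) (k : ℤ) :
    ‖fourierCoeffOn hab (iteratedDeriv n φ) k‖ ^ 2 =
      angularFrequency (b - a) k ^ (2 * n) * ‖fourierCoeffOn hab φ k‖ ^ 2 := by
  rw [fourierCoeffOn_iteratedDeriv hab hφ hper, norm_mul, mul_pow, norm_pow, norm_mul,
    Complex.norm_I, mul_one, Complex.norm_real, norm_eq_abs, ← pow_mul, mul_comm n 2,
    (even_two_mul n).pow_abs]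

lemma hasSum_sq_fourierCoeffOn_of_continuous (hab : a < b) (hφ : Continuous φ) :
    HasSum (fun k => ‖fourierCoeffOn hab φ k‖ ^ 2) ((b - a)⁻¹ * ∫ x in a..b, ‖φ x‖ ^ 2) :=
  hasSum_sq_fourierCoeffOn hab <| (memLp_two_iff_integrable_sq_norm hφ.aestronglyMeasurable).2
    (hφ.norm.pow 2).integrableOn_Ioc

/-- The squared norm of `H^n(a, b)` in the form `‖φ‖² + ‖φ⁽ⁿ⁾‖²`, without the intermediate
derivatives. -/
def sobolevEnergy (n : ℕ) (a b : ℝ) (φ : ℝ → ℂ) : ℝ :=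
  ∫ x in a..b, ‖φ x‖ ^ 2 + ‖iteratedDeriv n φ x‖ ^ 2

lemma hasSum_sobolevEnergy {n : ℕ} (hab : a < b) (hφ : ContDiff ℝ n φ)
    (hper : Function.Periodic φ (b - a)) :
    HasSum (fun k => (1 + angularFrequency (b - a) k ^ (2 * n)) * ‖fourierCoeffOn hab φ k‖ ^ 2)
      ((b - a)⁻¹ * sobolevEnergy n a b φ) := by
  have hφ₀ : Continuous φ := hφ.continuous
  have hφₙ : Continuous (iteratedDeriv n φ) := hφ.continuous_iteratedDeriv' n
  rw [sobolevEnergy, intervalIntegral.integral_add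
    (Continuous.intervalIntegrable (by fun_prop) _ _)
    (Continuous.intervalIntegrable (by fun_prop) _ _), mul_add]
  simp only [one_add_mul, ← norm_sq_fourierCoeffOn_iteratedDeriv hab hφ hper]
  exact (hasSum_sq_fourierCoeffOn_of_continuous hab hφ₀).add
    (hasSum_sq_fourierCoeffOn_of_continuous hab hφₙ)

end Fourier

section Strip

variable {E : Type*} {r ζ : ℝ}

/-- The restriction of `g` to the horizontal line `im = ζ`, as a function of the real part. -/
def lineTrace (g : ℂ → E) (ζ : ℝ) : ℝ → E := fun x => g (x + ζ * Complex.I)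

lemma lineTrace_neg (g : ℂ → E) (ζ : ℝ) :
    lineTrace g (-ζ) = fun x : ℝ => g (x - ζ * Complex.I) := by
  ext x
  simp only [lineTrace, Complex.ofReal_neg, neg_mul, ← sub_eq_add_neg]

lemma stripO_eq_preimage (r : ℝ) : stripO r = Complex.im ⁻¹' Ioo (-r) r :=
  Set.ext fun _ => by simp [stripO, abs_lt]

lemma stripC_eq_preimage (r : ℝ) : stripC r = Complex.im ⁻¹' Icc (-r) r :=
  Set.ext fun _ => by simp [stripC, abs_le]

lemma isOpen_stripO (r : ℝ) : IsOpen (stripO r) := by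
  rw [stripO_eq_preimage]
  exact isOpen_Ioo.preimage Complex.continuous_im

lemma line_mem_stripO (hζ : |ζ| < r) (x : ℝ) : (x : ℂ) + ζ * Complex.I ∈ stripO r := by
  simpa [stripO] using hζ

lemma periodic_lineTrace {g : ℂ → E} {T : ℝ} (hper : Function.Periodic g T) (ζ : ℝ) :
    Function.Periodic (lineTrace g ζ) T := by
  intro x
  simp only [lineTrace]
  rw [Complex.ofReal_add, add_right_comm, hper]

variable [NormedAddCommGroup E] [NormedSpace ℂ E]

lemma contDiff_lineTrace [CompleteSpace E] {g : ℂ → E} (hg : DifferentiableOn ℂ g (stripO r))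
    (hζ : |ζ| < r) (n : ℕ) : ContDiff ℝ n (lineTrace g ζ) := by
  have hg' : ContDiffOn ℝ n g (stripO r) := (hg.contDiffOn (isOpen_stripO r)).restrict_scalars ℝ
  exact hg'.comp_contDiff (Complex.ofRealCLM.contDiff.add contDiff_const) (line_mem_stripO hζ)

lemma deriv_lineTrace {g : ℂ → E} (hg : DifferentiableOn ℂ g (stripO r)) (hζ : |ζ| < r) :
    deriv (lineTrace g ζ) = lineTrace (deriv g) ζ := by
  ext x
  have hgx : DifferentiableAt ℂ g (x + ζ * Complex.I) :=
    hg.differentiableAt ((isOpen_stripO r).mem_nhds (line_mem_stripO hζ x))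
  have hline : HasDerivAt (fun y : ℝ => (y : ℂ) + ζ * Complex.I) 1 x :=
    (hasDerivAt_id (x : ℂ)).comp_ofReal.add_const _
  exact (hgx.hasDerivAt.scomp x hline).deriv.trans (one_smul _ _)

lemma integral_lineTrace_eq_of_periodic {F : ℂ → E} {a b η : ℝ}
    (hper : Function.Periodic F ((b - a : ℝ) : ℂ))
    (hc : ContinuousOn F (Complex.im ⁻¹' uIcc η ζ))
    (hd : DifferentiableOn ℂ F (Complex.im ⁻¹' uIoo η ζ)) :
    ∫ x in a..b, lineTrace F η x = ∫ x in a..b, lineTrace F ζ x := by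
  have hrect := Complex.integral_boundary_rect_eq_zero_of_continuousOn_of_differentiableOn F
    ⟨a, η⟩ ⟨b, ζ⟩ (hc.mono fun _ hw => hw.2) (hd.mono fun _ hw => hw.2)
  have hsides (y : ℝ) : F (b + y * Complex.I) = F (a + y * Complex.I) := by
    rw [← hper (a + y * Complex.I)]
    congr 1
    push_cast
    ring
  simp only [hsides, add_sub_cancel_right] at hrect
  exact sub_eq_zero.1 hrect

lemma lineTrace_cexp_smul (g : ℂ → E) (T ζ : ℝ) (k : ℤ) (x : ℝ) :
    lineTrace (fun w => Complex.exp (-(angularFrequency T k * w * Complex.I)) • g w) ζ x =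
      Complex.exp (angularFrequency T k * ζ) •
        (fourier (-k) (x : AddCircle T) • lineTrace g ζ x) := by
  rw [fourier_neg_coe_eq_cexp, smul_smul, ← Complex.exp_add]
  simp only [lineTrace]
  congr 2
  linear_combination (-(angularFrequency T k : ℂ) * ζ) * Complex.I_sq

lemma fourierCoeffOn_lineTrace {g : ℂ → E} {a b : ℝ} (hab : a < b)
    (hper : Function.Periodic g ((b - a : ℝ) : ℂ)) (hd : DifferentiableOn ℂ g (stripO r))
    (hc : ContinuousOn g (stripC r)) (hζ : |ζ| ≤ r) (k : ℤ) :
    fourierCoeffOn hab (lineTrace g ζ) k =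
      Complex.exp (-(angularFrequency (b - a) k * ζ)) •
        fourierCoeffOn hab (lineTrace g 0) k := by
  let F : ℂ → E := fun w =>
    Complex.exp (-(angularFrequency (b - a) k * w * Complex.I)) • g w
  have hζr : ζ ∈ Icc (-r) r := abs_le.1 hζ
  have h0r : 0 ∈ Icc (-r) r := abs_le.1 (abs_zero.trans_le ((abs_nonneg ζ).trans hζ))
  rw [stripO_eq_preimage] at hd
  rw [stripC_eq_preimage] at hc
  have hFper : Function.Periodic F ((b - a : ℝ) : ℂ) := fun w =>
    congr_arg₂ (· • ·) (periodic_cexp_angularFrequency (sub_pos.2 hab).ne' k w) (hper w)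
  have hFc : ContinuousOn F (Complex.im ⁻¹' uIcc ζ 0) :=
    ContinuousOn.smul (by fun_prop) (hc.mono (preimage_mono (uIcc_subset_Icc hζr h0r)))
  have hFd : DifferentiableOn ℂ F (Complex.im ⁻¹' uIoo ζ 0) :=
    DifferentiableOn.smul (by fun_prop) <| hd.mono <| preimage_mono <|
      Ioo_subset_Ioo (le_inf hζr.1 h0r.1) (sup_le hζr.2 h0r.2)
  have hshift := integral_lineTrace_eq_of_periodic (a := a) hFper hFc hFd
  simp only [F, lineTrace_cexp_smul, intervalIntegral.integral_smul, Complex.ofReal_zero, mul_zero,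
    Complex.exp_zero, one_smul] at hshift
  rw [fourierCoeffOn_eq_integral, fourierCoeffOn_eq_integral, ← hshift, smul_comm, smul_smul,
    ← Complex.exp_add, neg_add_cancel, Complex.exp_zero, one_smul]

lemma norm_sq_fourierCoeffOn_lineTrace {g : ℂ → E} {a b : ℝ} (hab : a < b)
    (hper : Function.Periodic g ((b - a : ℝ) : ℂ)) (hd : DifferentiableOn ℂ g (stripO r))
    (hc : ContinuousOn g (stripC r)) (hζ : |ζ| ≤ r) (k : ℤ) :
    ‖fourierCoeffOn hab (lineTrace g ζ) k‖ ^ 2 =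
      exp (-(2 * angularFrequency (b - a) k * ζ)) *
        ‖fourierCoeffOn hab (lineTrace g 0) k‖ ^ 2 := by
  rw [fourierCoeffOn_lineTrace hab hper hd hc hζ, norm_smul, mul_pow, ← Complex.ofReal_mul,
    ← Complex.ofReal_neg, Complex.norm_exp_ofReal, ← exp_nat_mul, Nat.cast_ofNat, mul_neg,
    ← mul_assoc]

lemma norm_sq_fourierCoeffOn_lineTrace_add_neg {g : ℂ → E} {a b : ℝ} (hab : a < b)
    (hper : Function.Periodic g ((b - a : ℝ) : ℂ)) (hd : DifferentiableOn ℂ g (stripO r))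
    (hc : ContinuousOn g (stripC r)) (hζ : |ζ| ≤ r) (k : ℤ) :
    ‖fourierCoeffOn hab (lineTrace g ζ) k‖ ^ 2 + ‖fourierCoeffOn hab (lineTrace g (-ζ)) k‖ ^ 2 =
      2 * cosh (2 * angularFrequency (b - a) k * ζ) *
        ‖fourierCoeffOn hab (lineTrace g 0) k‖ ^ 2 := by
  rw [norm_sq_fourierCoeffOn_lineTrace hab hper hd hc hζ,
    norm_sq_fourierCoeffOn_lineTrace hab hper hd hc ((abs_neg ζ).trans_le hζ), mul_neg, neg_neg,
    cosh_eq]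
  ring

end Strip

section CauchyEstimate

variable {g : ℂ → ℂ} {a b r s : ℝ}

lemma norm_sq_fourierCoeffOn_lineTrace_deriv (hab : a < b)
    (hper : Function.Periodic g ((b - a : ℝ) : ℂ)) (hd : DifferentiableOn ℂ g (stripO r))
    (hs : |s| < r) (k : ℤ) :
    ‖fourierCoeffOn hab (lineTrace (deriv g) s) k‖ ^ 2 =
      angularFrequency (b - a) k ^ 2 * ‖fourierCoeffOn hab (lineTrace g s) k‖ ^ 2 := by
  rw [← deriv_lineTrace hd hs, ← iteratedDeriv_one, norm_sq_fourierCoeffOn_iteratedDeriv hab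
    (contDiff_lineTrace hd hs 1) (periodic_lineTrace hper s)]

lemma norm_sq_fourierCoeffOn_lineTrace_deriv_add_neg_le (hab : a < b)
    (hper : Function.Periodic g ((b - a : ℝ) : ℂ)) (hd : DifferentiableOn ℂ g (stripO r))
    (hc : ContinuousOn g (stripC r)) (hs : 0 ≤ s) (hsr : s < r) (k : ℤ) :
    ‖fourierCoeffOn hab (lineTrace (deriv g) s) k‖ ^ 2 +
        ‖fourierCoeffOn hab (lineTrace (deriv g) (-s)) k‖ ^ 2 ≤
      (1 / (r - s)) ^ 2 * (‖fourierCoeffOn hab (lineTrace g r) k‖ ^ 2 +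
        ‖fourierCoeffOn hab (lineTrace g (-r)) k‖ ^ 2) := by
  have hs' : |s| < r := (abs_of_nonneg hs).trans_lt hsr
  have hr : |r| ≤ r := (abs_of_pos (hs.trans_lt hsr)).le
  rw [norm_sq_fourierCoeffOn_lineTrace_deriv hab hper hd hs',
    norm_sq_fourierCoeffOn_lineTrace_deriv hab hper hd ((abs_neg s).trans_lt hs'), ← mul_add,
    norm_sq_fourierCoeffOn_lineTrace_add_neg hab hper hd hc hs'.le,
    norm_sq_fourierCoeffOn_lineTrace_add_neg hab hper hd hc hr]
  have hcosh := sq_mul_cosh_le (angularFrequency (b - a) k) hs hsr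
  linear_combination 2 * ‖fourierCoeffOn hab (lineTrace g 0) k‖ ^ 2 * hcosh

lemma sobolevEnergy_lineTrace_deriv_add_neg_le {n : ℕ} (hab : a < b)
    (hper : Function.Periodic g ((b - a : ℝ) : ℂ)) (hd : DifferentiableOn ℂ g (stripO r))
    (hc : ContinuousOn g (stripC r)) (hs : 0 ≤ s) (hsr : s < r)
    (htop : ContDiff ℝ n (lineTrace g r)) (hbot : ContDiff ℝ n (lineTrace g (-r))) :
    sobolevEnergy n a b (lineTrace (deriv g) s) + sobolevEnergy n a b (lineTrace (deriv g) (-s)) ≤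
      (1 / (r - s)) ^ 2 *
        (sobolevEnergy n a b (lineTrace g r) + sobolevEnergy n a b (lineTrace g (-r))) := by
  have hsum {ζ : ℝ} (hζ : |ζ| < r) :
      HasSum (fun k => (1 + angularFrequency (b - a) k ^ (2 * n)) *
          ‖fourierCoeffOn hab (lineTrace (deriv g) ζ) k‖ ^ 2)
        ((b - a)⁻¹ * sobolevEnergy n a b (lineTrace (deriv g) ζ)) :=
    hasSum_sobolevEnergy hab (contDiff_lineTrace (hd.deriv (isOpen_stripO r)) hζ n)
      (periodic_lineTrace (periodic_deriv hper) ζ)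
  have hs' : |s| < r := (abs_of_nonneg hs).trans_lt hsr
  have hinner := (hsum hs').add (hsum ((abs_neg s).trans_lt hs'))
  have houter := ((hasSum_sobolevEnergy hab htop (periodic_lineTrace hper r)).add
    (hasSum_sobolevEnergy hab hbot (periodic_lineTrace hper (-r)))).mul_left ((1 / (r - s)) ^ 2)
  simp only [← mul_add, mul_left_comm ((1 / (r - s)) ^ 2)] at hinner houter
  refine le_of_mul_le_mul_left (hasSum_le (fun k => ?_) hinner houter) (inv_pos.2 (sub_pos.2 hab))
  refine mul_le_mul_of_nonneg_left
    (norm_sq_fourierCoeffOn_lineTrace_deriv_add_neg_le hab hper hd hc hs hsr k) ?_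
  exact add_nonneg zero_le_one ((even_two_mul n).pow_nonneg _)

lemma strNorm_eq_sqrt_sobolevEnergy (G : ℂ → ℂ) (ρ : ℝ) :
    strNorm G ρ = √(sobolevEnergy 4 (-π) π (lineTrace G ρ) +
      sobolevEnergy 4 (-π) π (lineTrace G (-ρ))) := by
  rw [lineTrace_neg]
  rfl

end CauchyEstimate

/-- Cauchy-type estimate on the scale of Banach spaces:
`‖∂_α g‖_{r'} ≤ C/(r - r') ‖g‖_r` for `2π`-periodic functions holomorphic
on the strip of half-width `r`, with a universal constant `C`. -/
theorem cauchy_estimate_strip :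
    ∃ C > 0, ∀ (r r' : ℝ) (g : ℂ → ℂ), 0 ≤ r' → r' < r →
      (∀ w : ℂ, g (w + ((2 * π : ℝ) : ℂ)) = g w) →
      DifferentiableOn ℂ g (stripO r) →
      ContinuousOn g (stripC r) →
      ContDiff ℝ 4 (fun α : ℝ => g ((α : ℂ) + (r : ℂ) * Complex.I)) →
      ContDiff ℝ 4 (fun α : ℝ => g ((α : ℂ) - (r : ℂ) * Complex.I)) →
      strNorm (deriv g) r' ≤ (C / (r - r')) * strNorm g r := by
  refine ⟨1, one_pos, fun r r' g hr' hlt hper hd hc htop hbot => ?_⟩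
  have hper' : Function.Periodic g ((π - -π : ℝ) : ℂ) := by
    rw [sub_neg_eq_add, ← two_mul]
    exact hper
  rw [← lineTrace_neg g r] at hbot
  rw [strNorm_eq_sqrt_sobolevEnergy, strNorm_eq_sqrt_sobolevEnergy,
    ← sqrt_sq (one_div_pos.2 (sub_pos.2 hlt)).le, ← sqrt_mul (sq_nonneg _)]
  exact sqrt_le_sqrt <| sobolevEnergy_lineTrace_deriv_add_neg_le (neg_lt_self pi_pos) hper' hd hc
    hr' hlt htop hbot
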